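/- Let X be a σ-compact, locally compact metric space and let f : X → ℝ be continuous and coercive (for every M ∈ ℝ there is a compact K ⊆ X with f ≥ M on X ∖ K). For r ∈ ℝ and s > 0, the set R⁺_{f,r,s} := { μ : μ a nonnegative Radon measure on X, ⟨μ, f⟩ ≤ r, μ(X) ≤ s } is compact in the topology of weak convergence of measures (every sequence in R⁺_{f,r,s} has a subsequence converging weakly to an element of R⁺_{f,r,s}). -/

import Mathlib

/-!
Coercivity makes `f` bounded below, say `-c ≤ f` with `c ≥ 0`. Markov's inequality for `f + c`
bounds the mass of every `μ j` outside a compact set on which `f` may be small, so the sequence is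
tight (`exists_compact_compl_le`).

A tight sequence of finite measures with bounded mass has a weakly convergent subsequence
(`exists_subseq_tendsto_of_tight`): extract a subsequence along which the masses converge. If the
limit mass is `0`, the measures converge to `0`; otherwise the normalized measures form a tight
family of probability measures on a separable metric space, where Prokhorov's theorem and
metrizability of the weak topology give sequential compactness.

The convergence so obtained holds against *bounded* continuous functions. In particular no mass is
lost, which is what makes `⟨·, f⟩` lower semicontinuous although `f` may take negative values
(`integrable_and_integral_le_of_tendsto`): truncate `f + c ≥ 0` at height `n`, pass to the limit in
`j`, then let `n → ∞` by monotone convergence and subtract `c` times the limit mass.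
-/

open MeasureTheory Filter Topology

open Classical in
/-- The pairing `⟨μ, f⟩ = ∫ f dμ`, with the convention that it equals `+∞`
when `f` is not integrable with respect to `μ`. -/
noncomputable def pairingE {X : Type*} [MeasurableSpace X] (μ : Measure X) (f : X → ℝ) :
    EReal :=
  if Integrable f μ then ((∫ x, f x ∂μ : ℝ) : EReal) else ⊤

/-- Weak convergence of measures, tested against continuous functions with
compact support. -/
def WeakConvCc {X : Type*} [TopologicalSpace X] [MeasurableSpace X]
    (μs : ℕ → Measure X) (μ : Measure X) : Prop :=
  ∀ φ : X → ℝ, Continuous φ → HasCompactSupport φ →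
    Tendsto (fun j => ∫ x, φ x ∂(μs j)) atTop (𝓝 (∫ x, φ x ∂μ))

open scoped NNReal ENNReal

lemma exists_neg_le_of_coercive {X : Type*} [TopologicalSpace X] {f : X → ℝ} (hf : Continuous f)
    (hcoer : ∀ M : ℝ, ∃ K : Set X, IsCompact K ∧ ∀ x ∉ K, M ≤ f x) :
    ∃ c : ℝ, 0 ≤ c ∧ ∀ x, -c ≤ f x := by
  obtain ⟨K, hK, hKf⟩ := hcoer 0
  obtain ⟨b, hb⟩ := (hK.image hf).bddBelow
  refine ⟨max 0 (-b), le_max_left _ _, fun x => ?_⟩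
  by_cases hx : x ∈ K
  · have h1 : b ≤ f x := hb ⟨x, hx, rfl⟩
    have h2 := le_max_right 0 (-b)
    linarith
  · have h1 := hKf x hx
    have h2 := le_max_left 0 (-b)
    linarith

/-- Uniform tightness of the measures of mass at most `s` with `∫ f ≤ r`, by Markov's inequality
for `f + c`. -/
lemma exists_compact_compl_le {X : Type*} [TopologicalSpace X] [MeasurableSpace X]
    {f : X → ℝ} (hcoer : ∀ M : ℝ, ∃ K : Set X, IsCompact K ∧ ∀ x ∉ K, M ≤ f x)
    {c : ℝ} (hc : 0 ≤ c) (hfc : ∀ x, -c ≤ f x) (r s : ℝ) {ε : ℝ≥0} (hε : 0 < ε) :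
    ∃ K : Set X, IsCompact K ∧ ∀ μ : FiniteMeasure X, Integrable f (μ : Measure X) →
      ∫ x, f x ∂(μ : Measure X) ≤ r → (μ.mass : ℝ) ≤ s → μ Kᶜ ≤ ε := by
  have hε' : (0 : ℝ) < ε := hε
  -- The level `M` at which Markov's inequality gives `μ (Kᶜ) ≤ (r + c * s) / M ≤ ε`.
  set M : ℝ := (|r + c * s| + 1) / ε with hM
  have hMpos : 0 < M := by positivity
  obtain ⟨K, hK, hKf⟩ := hcoer (M - c)
  refine ⟨K, hK, fun μ hint hr hs => ?_⟩
  have hmarkov := mul_meas_ge_le_integral_of_nonneg (μ := (μ : Measure X)) (f := fun x => f x + c)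
    (ae_of_all _ fun x => by simpa using by linarith [hfc x]) (hint.add (integrable_const c)) M
  have hsum : ∫ x, (f x + c) ∂(μ : Measure X) ≤ r + c * s := by
    rw [integral_add hint (integrable_const c), integral_const]
    have h1 : (μ : Measure X).real Set.univ = (μ.mass : ℝ) := rfl
    rw [h1, smul_eq_mul, mul_comm]
    gcongr
  have hsub : (μ : Measure X).real Kᶜ ≤ (μ : Measure X).real {x | M ≤ f x + c} := by
    refine measureReal_mono (fun x hx => ?_) (measure_ne_top _ _)
    have := hKf x hx
    show M ≤ f x + c
    linarith
  have hreal : ((μ Kᶜ : ℝ≥0) : ℝ) = (μ : Measure X).real Kᶜ := rfl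
  rw [← NNReal.coe_le_coe, hreal]
  have h2 : M * (μ : Measure X).real Kᶜ ≤ M * ε := by
    have h3 : M * ε = |r + c * s| + 1 := by rw [hM]; field_simp
    have h4 := mul_le_mul_of_nonneg_left hsub hMpos.le
    have h5 := le_abs_self (r + c * s)
    linarith
  exact le_of_mul_le_mul_left h2 hMpos

/-- Sequential form of Prokhorov's theorem for finite measures of bounded mass. -/
lemma exists_subseq_tendsto_of_tight {X : Type*} [MetricSpace X]
    [TopologicalSpace.SeparableSpace X] [MeasurableSpace X] [BorelSpace X]
    (μs : ℕ → FiniteMeasure X) (C : ℝ≥0) (hC : ∀ j, (μs j).mass ≤ C)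
    (htight : ∀ ε : ℝ≥0, 0 < ε → ∃ K : Set X, IsCompact K ∧ ∀ j, μs j Kᶜ ≤ ε) :
    ∃ μ : FiniteMeasure X, ∃ k : ℕ → ℕ, StrictMono k ∧
      Tendsto (fun i => μs (k i)) atTop (𝓝 μ) := by
  obtain ⟨m, -, k₁, hk₁, hm⟩ := (isCompact_Icc (a := (0 : ℝ≥0)) (b := C)).isSeqCompact
    (x := fun j => (μs j).mass) (fun j => ⟨zero_le, hC j⟩)
  rcases eq_or_ne m 0 with rfl | hm0
  · exact ⟨0, k₁, hk₁, FiniteMeasure.tendsto_zero_of_tendsto_zero_mass hm⟩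
  have hmpos : 0 < m := pos_iff_ne_zero.2 hm0
  obtain ⟨N, hN⟩ := eventually_atTop.1 (hm.eventually (eventually_gt_nhds (half_lt_self hmpos)))
  set νs : ℕ → FiniteMeasure X := fun i => μs (k₁ (i + N)) with hνs
  have hk₂ : StrictMono fun i => k₁ (i + N) := fun a b hab => hk₁ (by omega)
  have hνmass : ∀ i, m / 2 < (νs i).mass := fun i => hN (i + N) (by omega)
  have hνm : Tendsto (fun i => (νs i).mass) atTop (𝓝 m) := hm.comp (tendsto_add_atTop_nat N)
  have hν0 : ∀ i, νs i ≠ 0 := fun i h => by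
    have := hνmass i
    simp [h] at this
  have hne : Nonempty X := by
    by_contra h
    rw [not_nonempty_iff] at h
    apply hν0 0
    apply FiniteMeasure.eq_of_forall_apply_eq
    intro s _
    simp [Set.eq_empty_of_isEmpty s]
  have hPtight : IsTightMeasureSet
      {((P : ProbabilityMeasure X) : Measure X) | P ∈ Set.range fun i => (νs i).normalize} := by
    rw [isTightMeasureSet_iff_exists_isCompact_measure_compl_le]
    intro ε hε
    obtain ⟨δ, hδ, hδε⟩ := ENNReal.lt_iff_exists_nnreal_btwn.1 hε
    have hδ' : 0 < δ := by exact_mod_cast hδ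
    obtain ⟨K, hK, hKμ⟩ := htight (m / 2 * δ) (by positivity)
    refine ⟨K, hK, ?_⟩
    rintro _ ⟨_, ⟨i, rfl⟩, rfl⟩
    refine le_trans ?_ hδε.le
    rw [← ProbabilityMeasure.ennreal_coeFn_eq_coeFn_toMeasure, ENNReal.coe_le_coe,
      FiniteMeasure.normalize_eq_of_nonzero _ (hν0 i)]
    have hpos : 0 < (νs i).mass := lt_of_le_of_lt zero_le (hνmass i)
    rw [inv_mul_le_iff₀ hpos]
    exact (hKμ _).trans (by gcongr; exact (hνmass i).le)
  obtain ⟨P, -, k₃, hk₃, hP⟩ := (isCompact_closure_of_isTightMeasureSet hPtight).isSeqCompact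
    (x := fun i => (νs i).normalize) (fun i => subset_closure ⟨i, rfl⟩)
  refine ⟨m • P.toFiniteMeasure, fun i => k₁ (k₃ i + N), hk₂.comp hk₃, ?_⟩
  have hlim := (hνm.comp hk₃.tendsto_atTop).smul
    ((ProbabilityMeasure.toFiniteMeasure_continuous.tendsto P).comp hP)
  refine hlim.congr fun i => ?_
  exact ((νs (k₃ i)).self_eq_mass_smul_normalize).symm

/-- Lower semicontinuity of `μ ↦ ∫ f dμ` on sublevel sets, for `f` continuous and bounded below. -/
lemma integrable_and_integral_le_of_tendsto {X : Type*} [TopologicalSpace X] [MeasurableSpace X]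
    [BorelSpace X] {f : X → ℝ} (hf : Continuous f) {c : ℝ} (hfc : ∀ x, -c ≤ f x) {r : ℝ}
    {μs : ℕ → FiniteMeasure X} {μ : FiniteMeasure X} (hlim : Tendsto μs atTop (𝓝 μ))
    (hint : ∀ j, Integrable f (μs j : Measure X))
    (hr : ∀ j, ∫ x, f x ∂(μs j : Measure X) ≤ r) :
    Integrable f (μ : Measure X) ∧ ∫ x, f x ∂(μ : Measure X) ≤ r := by
  have hg0 : ∀ x, 0 ≤ f x + c := fun x => by linarith [hfc x]
  have hgcont : Continuous fun x => f x + c := by fun_prop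
  have hsum : ∀ ν : FiniteMeasure X, Integrable f (ν : Measure X) →
      ∫ x, (f x + c) ∂(ν : Measure X) = ∫ x, f x ∂(ν : Measure X) + ν.mass * c := by
    intro ν hν
    rw [integral_add hν (integrable_const c), integral_const]
    rfl
  have hmass : Tendsto (fun j => r + ((μs j).mass : ℝ) * c) atTop (𝓝 (r + (μ.mass : ℝ) * c)) :=
    (((NNReal.continuous_coe.tendsto _).comp
      ((FiniteMeasure.continuous_mass.tendsto μ).comp hlim)).mul_const c).const_add r
  have hbound : ∀ j, ∫ x, (f x + c) ∂(μs j : Measure X) ≤ r + ((μs j).mass : ℝ) * c := fun j => by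
    rw [hsum _ (hint j)]
    linarith [hr j]
  have hnonneg : 0 ≤ r + (μ.mass : ℝ) * c :=
    ge_of_tendsto' hmass fun j => (integral_nonneg hg0).trans (hbound j)
  have hlbound : ∀ j, ∫⁻ x, ENNReal.ofReal (f x + c) ∂(μs j : Measure X)
      ≤ ENNReal.ofReal (r + ((μs j).mass : ℝ) * c) := fun j => by
    have hgint : Integrable (fun x => f x + c) (μs j : Measure X) :=
      (hint j).add (integrable_const c)
    rw [← ofReal_integral_eq_lintegral_ofReal hgint (ae_of_all _ hg0)]
    exact ENNReal.ofReal_le_ofReal (hbound j)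
  -- The truncations of `f + c` are bounded continuous, so they may be tested against the limit.
  have htrunc : ∀ n : ℕ, ∫⁻ x, min (ENNReal.ofReal (f x + c)) n ∂(μ : Measure X)
      ≤ ENNReal.ofReal (r + (μ.mass : ℝ) * c) := by
    intro n
    let h : BoundedContinuousFunction X ℝ≥0 := BoundedContinuousFunction.mkOfBound
      ⟨fun x => min (f x + c).toNNReal n, by fun_prop⟩ n (fun x y => by
        rw [NNReal.dist_eq, abs_le]
        have h1 : ∀ z, (↑(min (f z + c).toNNReal (n : ℝ≥0)) : ℝ) ≤ n := fun z => by
          exact_mod_cast min_le_right _ _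
        have h2 : ∀ z, (0 : ℝ) ≤ ↑(min (f z + c).toNNReal (n : ℝ≥0)) := fun z => NNReal.coe_nonneg _
        constructor
        · have := h1 y
          have := h2 x
          simp only [ContinuousMap.coe_mk]
          linarith
        · have := h1 x
          have := h2 y
          simp only [ContinuousMap.coe_mk]
          linarith)
    have hh : ∀ x, ((h x : ℝ≥0) : ℝ≥0∞) = min (ENNReal.ofReal (f x + c)) n := fun x => by
      change ((min (f x + c).toNNReal (n : ℝ≥0) : ℝ≥0) : ℝ≥0∞) = _
      rw [ENNReal.coe_min]
      rfl
    have ht := FiniteMeasure.tendsto_iff_forall_lintegral_tendsto.1 hlim h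
    simp only [hh] at ht
    refine le_of_tendsto_of_tendsto' ht ((ENNReal.continuous_ofReal.tendsto _).comp hmass)
      fun j => ?_
    exact (lintegral_mono fun x => min_le_left _ _).trans (hlbound j)
  have hmeas : Measurable fun x => ENNReal.ofReal (f x + c) := hgcont.measurable.ennreal_ofReal
  have hlint : ∫⁻ x, ENNReal.ofReal (f x + c) ∂(μ : Measure X)
      ≤ ENNReal.ofReal (r + (μ.mass : ℝ) * c) := by
    refine le_of_tendsto' (lintegral_tendsto_of_tendsto_of_monotone
      (f := fun n : ℕ => fun x => min (ENNReal.ofReal (f x + c)) (n : ℝ≥0∞))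
      (fun n => (hmeas.min measurable_const).aemeasurable)
      (ae_of_all _ fun x a b hab => min_le_min_left _ (by exact_mod_cast hab))
      (ae_of_all _ fun x => ?_)) htrunc
    have h1 := (tendsto_const_nhds (x := ENNReal.ofReal (f x + c))).min
      ENNReal.tendsto_nat_nhds_top
    simpa using h1
  have hgint : Integrable (fun x => f x + c) (μ : Measure X) :=
    ⟨hgcont.measurable.aestronglyMeasurable, by
      rw [hasFiniteIntegral_iff_ofReal (ae_of_all _ hg0)]
      exact hlint.trans_lt ENNReal.ofReal_lt_top⟩
  have hfint : Integrable f (μ : Measure X) := by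
    refine (hgint.sub (integrable_const c)).congr (ae_of_all _ fun x => ?_)
    simp
  refine ⟨hfint, ?_⟩
  rw [← ofReal_integral_eq_lintegral_ofReal hgint (ae_of_all _ hg0),
    ENNReal.ofReal_le_ofReal_iff hnonneg, hsum _ hfint] at hlint
  linarith

lemma pairingE_le_coe_iff {X : Type*} [MeasurableSpace X] (μ : Measure X) (f : X → ℝ) (r : ℝ) :
    pairingE μ f ≤ (r : EReal) ↔ Integrable f μ ∧ ∫ x, f x ∂μ ≤ r := by
  unfold pairingE
  split_ifs with h
  · simp [h]
  · simp [h]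

/-- Lemma 2.2: for a continuous coercive `f`, the set
`R⁺_{f,r,s} = {μ : ⟨μ,f⟩ ≤ r, μ(X) ≤ s}` is (sequentially) compact in the topology of
weak convergence of measures. -/
theorem stmt1 {X : Type*} [MetricSpace X] [SigmaCompactSpace X] [LocallyCompactSpace X]
    [MeasurableSpace X] [BorelSpace X]
    (f : X → ℝ) (hf : Continuous f)
    (hcoer : ∀ M : ℝ, ∃ K : Set X, IsCompact K ∧ ∀ x ∉ K, M ≤ f x)
    (r s : ℝ) (hs : 0 < s)
    (μs : ℕ → Measure X)
    (hμs : ∀ j, pairingE (μs j) f ≤ (r : EReal) ∧ μs j Set.univ ≤ ENNReal.ofReal s) :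
    ∃ μ : Measure X, (pairingE μ f ≤ (r : EReal) ∧ μ Set.univ ≤ ENNReal.ofReal s) ∧
      ∃ k : ℕ → ℕ, StrictMono k ∧ WeakConvCc (fun i => μs (k i)) μ := by
  obtain ⟨c, hc, hfc⟩ := exists_neg_le_of_coercive hf hcoer
  have hpair := fun j => (pairingE_le_coe_iff _ _ _).1 (hμs j).1
  let νs : ℕ → FiniteMeasure X := fun j =>
    ⟨μs j, ⟨(hμs j).2.trans_lt ENNReal.ofReal_lt_top⟩⟩
  have hmass : ∀ j, (νs j).mass ≤ s.toNNReal := fun j => by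
    rw [← ENNReal.coe_le_coe, FiniteMeasure.ennreal_mass]
    exact (hμs j).2
  have hmass' : ∀ j, ((νs j).mass : ℝ) ≤ s := fun j => by
    rw [← Real.coe_toNNReal s hs.le]
    exact_mod_cast hmass j
  obtain ⟨μ, k, hk, hlim⟩ := exists_subseq_tendsto_of_tight νs s.toNNReal hmass fun ε hε => by
    obtain ⟨K, hK, hKμ⟩ := exists_compact_compl_le hcoer hc hfc r s hε
    exact ⟨K, hK, fun j => hKμ (νs j) (hpair j).1 (hpair j).2 (hmass' j)⟩
  refine ⟨μ, ⟨(pairingE_le_coe_iff _ _ _).2 ?_, ?_⟩, k, hk, fun φ hφ hφc => ?_⟩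
  · exact integrable_and_integral_le_of_tendsto hf hfc hlim (fun i => (hpair (k i)).1)
      (fun i => (hpair (k i)).2)
  · have h1 : μ.mass ≤ s.toNNReal :=
      le_of_tendsto' ((FiniteMeasure.continuous_mass.tendsto μ).comp hlim) fun i => hmass (k i)
    rw [← ENNReal.coe_le_coe, FiniteMeasure.ennreal_mass] at h1
    exact h1
  · obtain ⟨b, hb⟩ := hφc.exists_bound_of_continuous hφ
    exact FiniteMeasure.tendsto_iff_forall_integral_tendsto.1 hlim
      (BoundedContinuousFunction.ofNormedAddCommGroup φ hφ b hb)
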